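/- For every complex number z with Re z > 1, Kurepa's function satisfies the second-order functional equation K(z + 1) − (z + 1)·K(z) + z·K(z − 1) = 0. -/

import Mathlib

open MeasureTheory Set

/-- Kurepa's function `K(z) = ∫₀^∞ e^{-t} (t^z - 1)/(t - 1) dt`,
where `t^z = exp(z log t)` for `t > 0`. -/
noncomputable def kurepa (z : ℂ) : ℂ :=
  ∫ t in Ioi (0 : ℝ), (Real.exp (-t) : ℂ) * (((t : ℂ) ^ z - 1) / ((t : ℂ) - 1))

theorem kurepa_integrable (z : ℂ) (hz : 0 < z.re) :
    IntegrableOn (fun t : ℝ => (Real.exp (-t) : ℂ) * (((t : ℂ) ^ z - 1) / ((t : ℂ) - 1)))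
      (Ioi (0:ℝ)) := by
  have hsplit : Ioi (0:ℝ) = Ioc 0 2 ∪ Ioi 2 := (Ioc_union_Ioi_eq_Ioi (by norm_num)).symm
  rw [hsplit, integrableOn_union]
  constructor
  · have hc : ContinuousOn (dslope (fun t : ℝ => (t : ℂ) ^ z) 1) (Icc 0 2) := by
      rw [continuousOn_dslope (Icc_mem_nhds (by norm_num) (by norm_num))]
      constructor
      · exact (Complex.continuous_ofReal_cpow_const hz).continuousOn
      · have h := hasDerivAt_ofReal_cpow_const' (x := 1) (r := z - 1) one_ne_zero
          (by intro h; have := congrArg Complex.re h; simp at this; linarith)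
        have h2 := (h.const_mul z).differentiableAt
        have hz0 : z ≠ 0 := by rintro rfl; simp at hz
        refine h2.congr_of_eventuallyEq (Filter.Eventually.of_forall fun t => ?_)
        simp only [sub_add_cancel]
        field_simp
    have hi : IntegrableOn (fun t : ℝ => (Real.exp (-t) : ℂ) *
        dslope (fun t : ℝ => (t : ℂ) ^ z) 1 t) (Icc 0 2) := by
      apply ContinuousOn.integrableOn_Icc
      apply ContinuousOn.mul _ hc
      fun_prop
    refine (hi.mono_set Ioc_subset_Icc_self).congr ?_
    have h1 : ∀ᵐ t : ℝ, t ≠ 1 := by simp [ae_iff, measure_singleton]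
    filter_upwards [ae_restrict_of_ae h1] with t ht
    rw [dslope_of_ne _ ht, slope_def_module]
    simp [div_eq_inv_mul]
  · have hg : IntegrableOn (fun t : ℝ => (Real.exp (-t) : ℂ) * (t:ℂ) ^ (z + 1 - 1)) (Ioi 2) :=
      (Complex.GammaIntegral_convergent (s := z + 1) (by simp; linarith)).mono_set
        (Ioi_subset_Ioi (by norm_num))
    have hg1 : IntegrableOn (fun t : ℝ => (Real.exp (-t) : ℂ) * (t:ℂ) ^ ((1:ℂ) - 1)) (Ioi 2) :=
      (Complex.GammaIntegral_convergent (s := 1) (by simp)).mono_set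
        (Ioi_subset_Ioi (by norm_num))
    refine Integrable.mono (hg.sub hg1) ?_ ?_
    · have := Complex.continuous_ofReal_cpow_const hz
      have := this.measurable
      apply Measurable.aestronglyMeasurable
      apply Measurable.mul (by fun_prop)
      exact (this.sub_const 1).div (by fun_prop)
    · filter_upwards [ae_restrict_mem measurableSet_Ioi] with t ht
      have ht : (2:ℝ) < t := ht
      simp only [Pi.sub_apply, sub_self, Complex.cpow_zero, add_sub_cancel_right, ← mul_sub]
      rw [norm_mul, norm_mul, norm_div]
      gcongr
      apply div_le_self (norm_nonneg _)
      rw [← Complex.ofReal_one, ← Complex.ofReal_sub, Complex.norm_real, Real.norm_eq_abs]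
      rw [abs_of_pos] <;> linarith

theorem kurepa_step (z : ℂ) (hz : 0 < z.re) :
    kurepa (z + 1) - kurepa z = Complex.Gamma (z + 1) := by
  rw [Complex.Gamma_eq_integral (by simp; linarith), Complex.GammaIntegral, kurepa, kurepa,
    ← integral_sub (kurepa_integrable _ (by simp; linarith)) (kurepa_integrable _ hz)]
  apply integral_congr_ae
  have h1 : ∀ᵐ t : ℝ, t ≠ 1 := by simp [ae_iff, measure_singleton]
  filter_upwards [ae_restrict_of_ae h1, ae_restrict_mem measurableSet_Ioi] with t ht ht0
  have ht0' : (t:ℂ) ≠ 0 := by exact_mod_cast (ne_of_gt ht0)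
  have ht1 : (t:ℂ) - 1 ≠ 0 := sub_ne_zero.mpr (by exact_mod_cast ht)
  rw [Complex.cpow_add _ _ ht0', Complex.cpow_one, add_sub_cancel_right]
  field_simp
  ring

/-- For `Re z > 1`, Kurepa's function satisfies the second-order functional
equation `K(z+1) - (z+1) K(z) + z K(z-1) = 0`. -/
theorem kurepa_second_order_functional_equation (z : ℂ) (hz : 1 < z.re) :
    kurepa (z + 1) - (z + 1) * kurepa z + z * kurepa (z - 1) = 0 := by
  have h1 := kurepa_step z (by linarith)
  have h2 := kurepa_step (z - 1) (by simp; linarith)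
  have hz0 : z ≠ 0 := by rintro rfl; simp at hz; linarith
  rw [sub_add_cancel] at h2
  rw [Complex.Gamma_add_one z hz0] at h1
  linear_combination h1 - z * h2
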